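/- For all constants K ≥ 1 and c > 0 there exist constants C > 0 and δ > 0 with the following property. Let n ≥ 1 and let 𝐝 = (d_1,…,d_n) be a degree sequence with even sum M = Σ_i d_i and maximum entry Δ satisfying Δ² ≤ δM. Let H₁ and H₂ be edge-disjoint graphs on [n] with 𝐝^{H₁} ⪯ 𝐝 componentwise and with maximum degree Δ_{H₂} ≤ KΔ, and suppose M − 2|H₁| ≥ cM. Let u ≠ v with uv ∉ H₁ ∪ H₂, and suppose the set of graphs with degree sequence 𝐝 containing H₁ and avoiding all edges of H₂ is nonempty. Then P(uv ∈ 𝒢(n,𝐝) | H₁⁺, H₂⁻) = (1 + θ)·(d_u − d_u^{H₁})(d_v − d_v^{H₁})/(M − 2|H₁|) for some real θ with |θ| ≤ C·Δ²/M. -/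

import Mathlib

open Filter

noncomputable section

/-- The degree of the vertex `v` in the simple graph `G` on `[n]`. -/
def deg {n : ℕ} (G : SimpleGraph (Fin n)) (v : Fin n) : ℕ := (G.neighborSet v).ncard

/-- The number of edges of `G`. -/
def nedges {n : ℕ} (G : SimpleGraph (Fin n)) : ℕ := G.edgeSet.ncard

/-- The maximum degree of `G`. -/
def maxDeg {n : ℕ} (G : SimpleGraph (Fin n)) : ℕ := Finset.univ.sup (deg G)

/-- The probability that a graph chosen uniformly at random among all simple graphs on `[n]`
satisfying `base` also satisfies `Q`. -/
def prob {n : ℕ} (base Q : SimpleGraph (Fin n) → Prop) : ℝ :=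
  (Nat.card {G : SimpleGraph (Fin n) // base G ∧ Q G} : ℝ) /
    (Nat.card {G : SimpleGraph (Fin n) // base G} : ℝ)

/-!
Deleting `H₁` turns the conditional probability into the proportion of graphs containing `uv` among
the graphs `F` that have degree sequence `r = 𝐝 - 𝐝^{H₁}` and avoid `L = H₁ ∪ H₂`. Switching
`uv, xy` to `ux, vy` relates the `F` that contain `uv` to those that do not. With `m = ∑ r i` and
`D > r i + deg_L i`, a graph containing `uv` admits `m - O(D²)` switchings. A graph omitting `uv`
admits `r u * r v` reverse switchings, apart from those with `xy` a loop, an edge or in `L`.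

On average these exceptions are a fraction `O(D² / m)`. Indeed the forward count alone gives
`P(ab ∈ F) ≤ 2 * r a * r b / m` once `m ≥ 4D²`. Conditioning on `ab ∈ F` moves `ab` from `F` to
`L`, which leaves `r i + deg_L i` unchanged, so this bound iterates to bound the probability of any
fixed number of edges; here `ux` and `vy`, together with `xy` when it is neither a loop nor in `L`.
-/

section

open Finset SimpleGraph

theorem sum_sq_mul_sq_le {ι : Type*} [Fintype ι] {r : ι → ℕ} {D : ℕ} (hr : ∀ i, r i ≤ D) :
    ∑ x, ∑ y, r x ^ 2 * r y ^ 2 ≤ (D * ∑ i, r i) ^ 2 := by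
  rw [← sum_mul_sum, ← sq, mul_sum]
  gcongr with i
  rw [sq]
  exact Nat.mul_le_mul_right _ (hr i)

theorem prod_mul_map_le_prod_mul_map {ι : Type*} {r s : ι → ℕ} (h : ∀ i, r i ≤ s i)
    (E : Finset (Sym2 ι)) : ∏ e ∈ E, (e.map r).mul ≤ ∏ e ∈ E, (e.map s).mul := by
  refine prod_le_prod' fun e _ ↦ ?_
  induction e with | _ x y
  exact Nat.mul_le_mul (h x) (h y)

theorem abs_mul_div_sub_one_le {A B S m r b T E : ℝ} (hA : 0 ≤ A) (hAB : A + B = S)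
    (hS : 0 < S) (hr : 0 < r) (hm : 0 < m) (hb : 0 ≤ b) (hbm : 2 * b ≤ m) (hE : 0 ≤ E)
    (h₁ : A * m ≤ B * r + A * b) (h₂ : B * r ≤ A * m + T) (hT : T * m ≤ r * S * E) :
    |A * m / (S * r) - 1| ≤ (2 * b + 2 * r + E) / m := by
  have hSr : 0 < S * r := mul_pos hS hr
  have hA_le : A * (m - b) ≤ S * r := by
    subst hAB
    linarith [mul_nonneg hA hr.le]
  have hA_le' : A * m ≤ 2 * (S * r) := by linarith [mul_nonneg hA (sub_nonneg.2 hbm)]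
  rw [abs_sub_le_iff, sub_le_iff_le_add', one_add_div hm.ne', sub_le_comm, one_sub_div hm.ne',
    div_le_div_iff₀ hSr hm, div_le_div_iff₀ hm hSr]
  constructor
  · have h₃ : A * (m - b) * (m + 2 * b) ≤ S * r * (m + 2 * b) := by gcongr
    have h₄ : 0 ≤ A * b * (m - 2 * b) := mul_nonneg (mul_nonneg hA hb) (sub_nonneg.2 hbm)
    have h₅ : 0 ≤ S * r * (2 * r + E) := by positivity
    linarith
  · have h₃ : B * r * m ≤ (A * m + T) * m := by gcongr
    have h₄ : A * m * r ≤ 2 * (S * r) * r := by gcongr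
    have h₅ : 0 ≤ S * r * (2 * b) := by positivity
    subst hAB
    linarith

theorem mul_sq_div_le_mul_sq_div {a c D Δ k m M δ : ℝ} (ha : 0 ≤ a) (hc : 0 < c) (hM : 0 ≤ M)
    (hD₀ : 0 ≤ D) (hD : D ≤ k * Δ) (hδ : Δ ^ 2 ≤ δ * M) (hm : c * M ≤ m) :
    a * D ^ 2 / m ≤ a * k ^ 2 / c * Δ ^ 2 / M := by
  obtain rfl | hM := hM.eq_or_lt
  · have hΔ : Δ = 0 := pow_eq_zero_iff two_ne_zero |>.1 <|
      le_antisymm (by simpa using hδ) (sq_nonneg Δ)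
    have hD : D = 0 := le_antisymm (by simpa [hΔ] using hD) hD₀
    simp [hD, hΔ]
  · calc
      a * D ^ 2 / m ≤ a * (k * Δ) ^ 2 / (c * M) := by gcongr
      _ = a * k ^ 2 / c * Δ ^ 2 / M := by field_simp

theorem mul_sq_le_of_sq_le {a c D Δ k m M : ℝ} (ha : 0 < a) (hk : 0 < k) (hD₀ : 0 ≤ D)
    (hD : D ≤ k * Δ) (hδ : Δ ^ 2 ≤ c / (a * k ^ 2) * M) (hm : c * M ≤ m) : a * D ^ 2 ≤ m := calc
  a * D ^ 2 ≤ a * (k * Δ) ^ 2 := by gcongr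
  _ = a * k ^ 2 * Δ ^ 2 := by ring
  _ ≤ a * k ^ 2 * (c / (a * k ^ 2) * M) := by gcongr
  _ = c * M := by field_simp
  _ ≤ m := hm

variable {V : Type*}

section Degree

variable {G H : SimpleGraph V} {a b c e : V}

theorem degree_sup_of_disjoint (h : Disjoint G H) (w : V) [Fintype (G.neighborSet w)]
    [Fintype (H.neighborSet w)] [Fintype ((G ⊔ H).neighborSet w)] :
    (G ⊔ H).degree w = G.degree w + H.degree w := by
  rw [← card_neighborFinset_eq_degree, neighborFinset_sup_of_disjoint w h, card_disjUnion,
    card_neighborFinset_eq_degree, card_neighborFinset_eq_degree]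

theorem degree_sdiff_add_degree (h : H ≤ G) (w : V) [Fintype (G.neighborSet w)]
    [Fintype (H.neighborSet w)] [Fintype ((G \ H).neighborSet w)] :
    (G \ H).degree w + H.degree w = G.degree w := by
  have : Fintype ((G \ H ⊔ H).neighborSet w) := by rwa [sdiff_sup_cancel h]
  rw [← degree_sup_of_disjoint disjoint_sdiff_self_left]
  congr!
  exact sdiff_sup_cancel h

theorem degree_edge [DecidableEq V] (h : a ≠ b) (w : V) [Fintype ((edge a b).neighborSet w)] :
    (edge a b).degree w = (if w = a then 1 else 0) + if w = b then 1 else 0 := by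
  have hN : (edge a b).neighborFinset w =
      if w = a then {b} else if w = b then {a} else ∅ := by
    ext z
    simp only [mem_neighborFinset, edge_adj]
    grind
  rw [← card_neighborFinset_eq_degree, hN]
  grind

theorem degree_edge_sup_edge [Finite V] [DecidableEq V] (hab : a ≠ b) (hce : c ≠ e)
    (h : Disjoint (edge a b) (edge c e)) (w : V) [Fintype ((edge a b ⊔ edge c e).neighborSet w)] :
    (edge a b ⊔ edge c e).degree w =
      (if w = a then 1 else 0) + (if w = b then 1 else 0) +
        ((if w = c then 1 else 0) + if w = e then 1 else 0) := by
  have := Fintype.ofFinite V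
  rw [degree_sup_of_disjoint h, degree_edge hab, degree_edge hce]

theorem sum_degree_edge [Fintype V] (h : a ≠ b)
    [∀ w, Fintype ((edge a b).neighborSet w)] : ∑ w, (edge a b).degree w = 2 := by
  classical
  simp [degree_edge h, sum_add_distrib]

theorem sum_sub_degree_edge [Fintype V] {r : V → ℕ} (h : a ≠ b)
    [∀ w, Fintype ((edge a b).neighborSet w)] (hr : ∀ w, (edge a b).degree w ≤ r w) :
    ∑ w, (r w - (edge a b).degree w) = ∑ w, r w - 2 := by
  rw [sum_tsub_distrib _ fun w _ ↦ hr w, sum_degree_edge h]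

theorem sub_degree_add_degree_sup {r : V → ℕ} (h : Disjoint G H) (w : V)
    [Fintype (G.neighborSet w)] [Fintype (H.neighborSet w)] [Fintype ((G ⊔ H).neighborSet w)]
    (hr : H.degree w ≤ r w) : r w - H.degree w + (G ⊔ H).degree w = r w + G.degree w := by
  rw [degree_sup_of_disjoint h]
  omega

theorem insert_subset_edgeFinset_iff [DecidableEq V] {E : Finset (Sym2 V)} (hE : s(a, b) ∉ E)
    (h : a ≠ b) [Fintype G.edgeSet] [Fintype (G \ edge a b).edgeSet] :
    insert s(a, b) E ⊆ G.edgeFinset ↔ edge a b ≤ G ∧ E ⊆ (G \ edge a b).edgeFinset := by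
  rw [insert_subset_iff, edge_le_iff, mem_edgeFinset, mem_edgeSet, or_iff_right h]
  refine and_congr_right fun _ ↦ ?_
  simp only [subset_iff, mem_edgeFinset, edgeSet_sdiff, edgeSet_edge_of_ne h, Set.mem_sdiff,
    Set.mem_singleton_iff]
  exact forall₂_congr fun e he ↦ (and_iff_left (ne_of_mem_of_not_mem he hE)).symm

theorem card_interedges_univ_right [Fintype V] (G : SimpleGraph V) [DecidableRel G.Adj]
    (s : Finset V) : #(G.interedges s univ) = ∑ x ∈ s, G.degree x := by
  rw [interedges_def, card_filter, sum_product]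
  refine sum_congr rfl fun x _ ↦ ?_
  rw [← card_filter, ← neighborFinset_eq_filter, card_neighborFinset_eq_degree]

end Degree

section Switching

/-- The graph obtained from `F` by replacing the edges `uv` and `xy` by `ux` and `vy`. -/
abbrev switch (F : SimpleGraph V) (u v x y : V) : SimpleGraph V :=
  F \ (edge u v ⊔ edge x y) ⊔ (edge u x ⊔ edge v y)

/-- The switching replacing `uv`, `xy` by `ux`, `vy` is legal for `F`, with `L` as the set of pairs
that may not become edges. -/
def IsSwitchable (L F : SimpleGraph V) (u v x y : V) : Prop :=
  F.Adj u v ∧ F.Adj x y ∧ u ≠ x ∧ v ≠ y ∧ ¬(F ⊔ L).Adj u x ∧ ¬(F ⊔ L).Adj v y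

variable {L F : SimpleGraph V} {u v x y : V}

namespace IsSwitchable

theorem le (h : IsSwitchable L F u v x y) : edge u v ⊔ edge x y ≤ F :=
  sup_le (F.edge_le_iff.2 (.inr h.1)) (F.edge_le_iff.2 (.inr h.2.1))

theorem disjoint (h : IsSwitchable L F u v x y) : Disjoint (F ⊔ L) (edge u x ⊔ edge v y) :=
  disjoint_sup_right.2 ⟨(disjoint_edge _).2 h.2.2.2.2.1, (disjoint_edge _).2 h.2.2.2.2.2⟩

theorem disjoint_left (h : IsSwitchable L F u v x y) : Disjoint F (edge u x ⊔ edge v y) :=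
  h.disjoint.mono_left le_sup_left

theorem degree_eq [Finite V] (h : IsSwitchable L F u v x y) (w : V)
    [Fintype ((edge u v ⊔ edge x y).neighborSet w)]
    [Fintype ((edge u x ⊔ edge v y).neighborSet w)] :
    (edge u v ⊔ edge x y).degree w = (edge u x ⊔ edge v y).degree w := by
  classical
  have := Fintype.ofFinite V
  obtain ⟨huv, hxy, hux, hvy, hux', -⟩ := h
  have hd : Disjoint (edge u v) (edge x y) := by
    simp only [disjoint_edge, edge_adj]
    grind
  have hd' : Disjoint (edge u x) (edge v y) := by
    simp only [disjoint_edge, edge_adj]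
    grind [huv.ne, hxy.ne]
  rw [degree_edge_sup_edge huv.ne hxy.ne hd, degree_edge_sup_edge hux hvy hd']
  ring

theorem degree_switch [Finite V] (h : IsSwitchable L F u v x y) (w : V)
    [Fintype (F.neighborSet w)] [Fintype ((switch F u v x y).neighborSet w)] :
    (switch F u v x y).degree w = F.degree w := by
  classical
  have := Fintype.ofFinite V
  rw [degree_sup_of_disjoint (h.disjoint_left.mono_left sdiff_le), ← h.degree_eq,
    degree_sdiff_add_degree h.le]

theorem switch_switch (h : IsSwitchable L F u v x y) : switch (switch F u v x y) u x v y = F := by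
  rw [switch, switch, (h.disjoint_left.mono_left sdiff_le).sup_sdiff_cancel_right,
    sdiff_sup_cancel h.le]

theorem disjoint_switch (h : IsSwitchable L F u v x y) (hF : Disjoint F L) :
    Disjoint (switch F u v x y) L :=
  disjoint_sup_left.2 ⟨hF.mono_left sdiff_le, (h.disjoint.mono_left le_sup_right).symm⟩

theorem switch (h : IsSwitchable L F u v x y) (hF : Disjoint F L) :
    IsSwitchable L (switch F u v x y) u x v y := by
  obtain ⟨huv, hxy, hux, hvy, hux', hvy'⟩ := h
  have huvL := SimpleGraph.disjoint_left.1 hF _ _ huv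
  have hxyL := SimpleGraph.disjoint_left.1 hF _ _ hxy
  simp only [IsSwitchable, _root_.switch, sup_adj, sdiff_adj, edge_adj] at *
  grind [huv.ne, hxy.ne, huv.symm, hxy.symm]

end IsSwitchable

variable [Fintype V] [DecidableEq V] [∀ F : SimpleGraph V, DecidableRel F.Adj]

instance : Decidable (IsSwitchable L F u v x y) :=
  inferInstanceAs (Decidable (_ ∧ _))

/-- The pairs `(x, y)` of a neighbour of `u` and a neighbour of `v` for which `ux`, `vy` cannot be
switched to `uv`, `xy`, because `xy` is a loop, an edge or a forbidden pair. Requiring `x ≠ v` and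
`y ≠ u`, which is automatic when `uv` is not an edge, makes `ux` and `vy` distinct in every `F`. -/
def obstructions (L F : SimpleGraph V) (u v : V) : Finset (V × V) :=
  {p | F.Adj u p.1 ∧ F.Adj v p.2 ∧ p.1 ≠ v ∧ p.2 ≠ u ∧ (p.1 = p.2 ∨ (F ⊔ L).Adj p.1 p.2)}

theorem card_interedges_insert_neighborFinset_le {D : ℕ} (hD : ∀ i, F.degree i + L.degree i < D)
    (w : V) : #(F.interedges (insert w ((F ⊔ L).neighborFinset w)) univ) ≤ D ^ 2 := by
  have hN : #(insert w ((F ⊔ L).neighborFinset w)) ≤ D := by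
    refine (card_insert_le _ _).trans (lt_of_le_of_lt ?_ (hD w))
    rw [neighborFinset_sup, ← card_neighborFinset_eq_degree, ← card_neighborFinset_eq_degree]
    exact card_union_le _ _
  rw [card_interedges_univ_right, sq]
  exact (sum_le_card_nsmul _ _ D fun i _ ↦ (Nat.le_add_right _ _).trans (hD i).le).trans
    (Nat.mul_le_mul_right D hN)

theorem sum_degree_le_card_isSwitchable_add {D : ℕ} (hD : ∀ i, F.degree i + L.degree i < D)
    (huv : F.Adj u v) :
    ∑ i, F.degree i ≤ #{p : V × V | IsSwitchable L F u v p.1 p.2} + 2 * D ^ 2 := by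
  set N : V → Finset V := fun w ↦ insert w ((F ⊔ L).neighborFinset w) with hN
  have hcover : F.interedges univ univ ⊆ ({p | IsSwitchable L F u v p.1 p.2} : Finset (V × V)) ∪
      (F.interedges (N u) univ ∪ F.interedges univ (N v)) := by
    intro p hp
    simp only [mem_union, mem_interedges_iff, IsSwitchable, mem_univ, true_and, hN,
      mem_insert, mem_neighborFinset] at hp ⊢
    grind
  calc
    ∑ i, F.degree i = #(F.interedges univ univ) := (card_interedges_univ_right F univ).symm
    _ ≤ _ := card_le_card hcover
    _ ≤ _ := (card_union_le _ _).trans (Nat.add_le_add_left (card_union_le _ _) _)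
    _ ≤ #{p : V × V | IsSwitchable L F u v p.1 p.2} + (D ^ 2 + D ^ 2) := by
      gcongr
      · exact card_interedges_insert_neighborFinset_le hD u
      · have : Std.Symm F.Adj := F.symm
        exact (Rel.card_interedges_comm _ _).trans_le
          (card_interedges_insert_neighborFinset_le hD v)
    _ = _ := by ring

theorem card_isSwitchable_le_degree_mul_degree (L F : SimpleGraph V) (u v : V) :
    #{p : V × V | IsSwitchable L F u p.1 v p.2} ≤ F.degree u * F.degree v := by
  rw [← card_neighborFinset_eq_degree, ← card_neighborFinset_eq_degree, ← card_product]
  refine card_le_card fun p hp ↦ ?_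
  obtain ⟨hu, hv, -⟩ := (mem_filter_univ p).1 hp
  simp [hu, hv]

theorem degree_mul_degree_le_card_isSwitchable_add (huv : u ≠ v) (hF : ¬(F ⊔ L).Adj u v) :
    F.degree u * F.degree v ≤
      #{p : V × V | IsSwitchable L F u p.1 v p.2} + #(obstructions L F u v) := by
  rw [← card_neighborFinset_eq_degree, ← card_neighborFinset_eq_degree, ← card_product]
  refine (card_le_card fun p hp ↦ ?_).trans (card_union_le _ _)
  simp only [mem_union, mem_filter_univ, mem_product, mem_neighborFinset, IsSwitchable,
    obstructions, sup_adj] at hp hF ⊢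
  grind [F.adj_comm u v]

end Switching

section Realizations

variable [Fintype V] [DecidableEq V] [∀ F : SimpleGraph V, DecidableRel F.Adj]
  {r : V → ℕ} {L : SimpleGraph V} {u v : V} {D : ℕ}

open Classical in
/-- The graphs with degree sequence `r` that avoid the edges of `L`. -/
def realizations (r : V → ℕ) (L : SimpleGraph V) : Finset (SimpleGraph V) :=
  {F | (∀ i, F.degree i = r i) ∧ Disjoint F L}

theorem mem_realizations {F : SimpleGraph V} :
    F ∈ realizations r L ↔ (∀ i, F.degree i = r i) ∧ Disjoint F L := by
  simp only [realizations, mem_filter_univ]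

theorem card_filter_isSwitchable_comm (r : V → ℕ) (L : SimpleGraph V) (u v x y : V) :
    #{F ∈ realizations r L | IsSwitchable L F u v x y} =
      #{F ∈ realizations r L | IsSwitchable L F u x v y} := by
  have hmaps : ∀ v x, ∀ F ∈ {F ∈ realizations r L | IsSwitchable L F u v x y},
      switch F u v x y ∈ {F ∈ realizations r L | IsSwitchable L F u x v y} := by
    simp only [mem_filter, mem_realizations]
    rintro v x F ⟨⟨hr, hL⟩, h⟩
    exact ⟨⟨fun i ↦ (h.degree_switch i).trans (hr i), h.disjoint_switch hL⟩, h.switch hL⟩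
  exact card_nbij' (switch · u v x y) (switch · u x v y) (hmaps v x) (hmaps x v)
    (fun F hF ↦ (mem_filter.1 hF).2.switch_switch) fun F hF ↦ (mem_filter.1 hF).2.switch_switch

theorem sum_card_isSwitchable_comm (r : V → ℕ) (L : SimpleGraph V) (u v : V) :
    ∑ F ∈ realizations r L with F.Adj u v, #{p : V × V | IsSwitchable L F u v p.1 p.2} =
      ∑ F ∈ realizations r L with ¬F.Adj u v, #{p : V × V | IsSwitchable L F u p.1 v p.2} := by
  rw [sum_filter_of_ne, sum_filter_of_ne]
  · calc
      _ = ∑ p : V × V, #{F ∈ realizations r L | IsSwitchable L F u v p.1 p.2} :=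
        sum_card_bipartiteAbove_eq_sum_card_bipartiteBelow _
      _ = ∑ p : V × V, #{F ∈ realizations r L | IsSwitchable L F u p.1 v p.2} :=
        sum_congr rfl fun p _ ↦ card_filter_isSwitchable_comm r L u v p.1 p.2
      _ = _ := (sum_card_bipartiteAbove_eq_sum_card_bipartiteBelow _).symm
  · intro F _ hF huv
    refine hF (card_eq_zero.2 (filter_eq_empty_iff.2 fun p _ h ↦ ?_))
    exact h.2.2.2.2.1 (.inl huv)
  · intro F _ hF
    obtain ⟨p, hp⟩ := card_ne_zero.1 hF
    exact (mem_filter_univ p |>.1 hp).1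

theorem card_adj_mul_le (hD : ∀ i, r i + L.degree i < D) (u v : V) :
    #{F ∈ realizations r L | F.Adj u v} * ∑ i, r i ≤
      #{F ∈ realizations r L | ¬F.Adj u v} * (r u * r v) +
        #{F ∈ realizations r L | F.Adj u v} * (2 * D ^ 2) := by
  calc
    _ = ∑ F ∈ realizations r L with F.Adj u v, ∑ i, r i := by rw [sum_const, smul_eq_mul]
    _ ≤ ∑ F ∈ realizations r L with F.Adj u v,
          (#{p : V × V | IsSwitchable L F u v p.1 p.2} + 2 * D ^ 2) := by
      refine sum_le_sum fun F hF ↦ ?_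
      obtain ⟨hF, huv⟩ := mem_filter.1 hF
      simp only [← (mem_realizations.1 hF).1] at hD ⊢
      exact sum_degree_le_card_isSwitchable_add hD huv
    _ = ∑ F ∈ realizations r L with ¬F.Adj u v, #{p : V × V | IsSwitchable L F u p.1 v p.2} +
          #{F ∈ realizations r L | F.Adj u v} * (2 * D ^ 2) := by
      rw [sum_add_distrib, sum_card_isSwitchable_comm, sum_const, smul_eq_mul]
    _ ≤ _ := by
      gcongr
      refine sum_le_card_nsmul _ _ _ fun F hF ↦ ?_
      simp only [← (mem_realizations.1 (mem_filter.1 hF).1).1]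
      exact card_isSwitchable_le_degree_mul_degree L F u v

theorem card_not_adj_mul_le (huv : u ≠ v) (hL : ¬L.Adj u v) :
    #{F ∈ realizations r L | ¬F.Adj u v} * (r u * r v) ≤
      #{F ∈ realizations r L | F.Adj u v} * ∑ i, r i +
        ∑ F ∈ realizations r L, #(obstructions L F u v) := by
  calc
    _ = ∑ F ∈ realizations r L with ¬F.Adj u v, r u * r v := by rw [sum_const, smul_eq_mul]
    _ ≤ ∑ F ∈ realizations r L with ¬F.Adj u v,
          (#{p : V × V | IsSwitchable L F u p.1 v p.2} + #(obstructions L F u v)) := by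
      refine sum_le_sum fun F hF ↦ ?_
      obtain ⟨hF, hFuv⟩ := mem_filter.1 hF
      simp only [← (mem_realizations.1 hF).1]
      exact degree_mul_degree_le_card_isSwitchable_add huv (by simp [hFuv, hL])
    _ = ∑ F ∈ realizations r L with F.Adj u v, #{p : V × V | IsSwitchable L F u v p.1 p.2} +
          ∑ F ∈ realizations r L with ¬F.Adj u v, #(obstructions L F u v) := by
      rw [sum_add_distrib, sum_card_isSwitchable_comm]
    _ ≤ _ := by
      gcongr ?_ + ?_
      · refine sum_le_card_nsmul _ _ _ fun F hF ↦ ?_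
        simp only [← (mem_realizations.1 (mem_filter.1 hF).1).1]
        rw [← card_interedges_univ_right]
        refine card_le_card fun p hp ↦ ?_
        simpa [interedges_def] using ((mem_filter_univ p).1 hp).2.1
      · exact sum_le_sum_of_subset (filter_subset _ _)

theorem card_filter_le_and_sdiff {P : SimpleGraph V} (hPL : Disjoint P L)
    (hP : ∀ i, P.degree i ≤ r i) (Q : SimpleGraph V → Prop) [DecidablePred Q]
    [DecidablePred fun F ↦ P ≤ F ∧ Q (F \ P)] :
    #{F ∈ realizations r L | P ≤ F ∧ Q (F \ P)} =
      #{F ∈ realizations (fun i ↦ r i - P.degree i) (L ⊔ P) | Q F} := by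
  refine card_nbij' (· \ P) (· ⊔ P) (fun F hF ↦ ?_) (fun F hF ↦ ?_) (fun F hF ↦ ?_) fun F hF ↦ ?_
  all_goals
    simp only [coe_filter, Set.mem_ofPred_eq, mem_realizations, disjoint_sup_right] at hF ⊢
  · obtain ⟨⟨hr, hL⟩, hPF, hQ⟩ := hF
    exact ⟨⟨fun i ↦ by rw [← hr, ← degree_sdiff_add_degree hPF i, Nat.add_sub_cancel],
      hL.mono_left sdiff_le, disjoint_sdiff_self_left⟩, hQ⟩
  · obtain ⟨⟨hr, hL, hFP⟩, hQ⟩ := hF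
    refine ⟨⟨fun i ↦ ?_, disjoint_sup_left.2 ⟨hL, hPL⟩⟩, le_sup_right, ?_⟩
    · rw [degree_sup_of_disjoint hFP, hr, Nat.sub_add_cancel (hP i)]
    · rwa [hFP.sup_sdiff_cancel_right]
  · exact sdiff_sup_cancel hF.2.1
  · exact hF.1.2.2.sup_sdiff_cancel_right

theorem card_adj_mul_le_two_mul (hD : ∀ i, r i + L.degree i < D) (hm : 4 * D ^ 2 ≤ ∑ i, r i)
    (u v : V) :
    #{F ∈ realizations r L | F.Adj u v} * ∑ i, r i ≤ 2 * (r u * r v) * #(realizations r L) := by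
  have h := card_adj_mul_le hD u v
  have hB : #{F ∈ realizations r L | ¬F.Adj u v} * (r u * r v) ≤
      #(realizations r L) * (r u * r v) := by
    gcongr
    exact filter_subset _ _
  have hA := Nat.mul_le_mul_left #{F ∈ realizations r L | F.Adj u v} hm
  linarith

theorem card_filter_insert_subset_edgeFinset {E : Finset (Sym2 V)} (hE : s(u, v) ∉ E)
    (huv : u ≠ v) (hL : ¬L.Adj u v) (hr : ∀ i, (edge u v).degree i ≤ r i) :
    #{F ∈ realizations r L | insert s(u, v) E ⊆ F.edgeFinset} =
      #{F ∈ realizations (fun i ↦ r i - (edge u v).degree i) (L ⊔ edge u v) |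
        E ⊆ F.edgeFinset} := by
  classical
  rw [← card_filter_le_and_sdiff ((L.disjoint_edge).2 hL).symm hr fun F ↦ E ⊆ F.edgeFinset]
  congr! 3 with F
  convert insert_subset_edgeFinset_iff hE huv

theorem card_realizations_sub_degree_edge (huv : u ≠ v) (hL : ¬L.Adj u v)
    (hr : ∀ i, (edge u v).degree i ≤ r i) :
    #(realizations (fun i ↦ r i - (edge u v).degree i) (L ⊔ edge u v)) =
      #{F ∈ realizations r L | F.Adj u v} := by
  simpa using (card_filter_insert_subset_edgeFinset (notMem_empty _) huv hL hr).symm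

theorem card_subset_edgeFinset_mul_pow_le {μ : ℕ} (hD : ∀ i, r i + L.degree i < D)
    (E : Finset (Sym2 V)) (hDμ : 4 * D ^ 2 ≤ μ) (hμ : μ + 2 * #E ≤ ∑ i, r i) :
    #{F ∈ realizations r L | E ⊆ F.edgeFinset} * μ ^ #E ≤
      2 ^ #E * (∏ e ∈ E, (e.map r).mul) * #(realizations r L) := by
  induction E using Finset.induction generalizing r L with
  | empty => simp
  | insert e E he ih =>
    induction e with | _ u v
    obtain hemp | ⟨F₀, hF₀⟩ :=
      {F ∈ realizations r L | insert s(u, v) E ⊆ F.edgeFinset}.eq_empty_or_nonempty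
    · simp [hemp]
    obtain ⟨hF₀, hEF₀⟩ := mem_filter.1 hF₀
    obtain ⟨hr₀, hL₀⟩ := mem_realizations.1 hF₀
    have huv₀ : F₀.Adj u v := mem_edgeFinset.1 (hEF₀ (mem_insert_self _ _))
    have huv : u ≠ v := huv₀.ne
    have hL : ¬L.Adj u v := SimpleGraph.disjoint_left.1 hL₀ _ _ huv₀
    have hr (i : V) : (edge u v).degree i ≤ r i :=
      (degree_le_of_le ((edge_le_iff _).2 (.inr huv₀))).trans_eq (hr₀ i)
    rw [card_insert_of_notMem he] at hμ ⊢
    specialize ih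
      (fun i ↦ (sub_degree_add_degree_sup (L.disjoint_edge.2 hL) i (hr i)).trans_lt (hD i))
      (by rw [sum_sub_degree_edge huv hr]; omega)
    have hA : #{F ∈ realizations r L | F.Adj u v} * μ ≤ 2 * (r u * r v) * #(realizations r L) :=
      (Nat.mul_le_mul_left _ (by omega)).trans (card_adj_mul_le_two_mul hD (by omega) u v)
    have hprod := prod_mul_map_le_prod_mul_map (r := fun i ↦ r i - (edge u v).degree i)
      (fun i ↦ Nat.sub_le _ _) E
    rw [prod_insert he, card_filter_insert_subset_edgeFinset he huv hL hr, pow_succ, pow_succ,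
      Sym2.map_mk, Sym2.mul_mk]
    rw [card_realizations_sub_degree_edge huv hL hr] at ih
    calc
      _ ≤ 2 ^ #E * (∏ e ∈ E, (e.map r).mul) * (#{F ∈ realizations r L | F.Adj u v} * μ) := by
        rw [← mul_assoc, ← mul_assoc]
        exact Nat.mul_le_mul_right μ (ih.trans (by gcongr))
      _ ≤ 2 ^ #E * (∏ e ∈ E, (e.map r).mul) * (2 * (r u * r v) * #(realizations r L)) := by gcongr
      _ = _ := by ring

theorem card_subset_edgeFinset_mul_sum_pow_le (hD : ∀ i, r i + L.degree i < D)
    (E : Finset (Sym2 V)) (hDm : 4 * D ^ 2 + 2 * #E ≤ ∑ i, r i) (hE : 4 * #E ≤ ∑ i, r i) :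
    #{F ∈ realizations r L | E ⊆ F.edgeFinset} * (∑ i, r i) ^ #E ≤
      4 ^ #E * (∏ e ∈ E, (e.map r).mul) * #(realizations r L) := by
  calc
    _ ≤ #{F ∈ realizations r L | E ⊆ F.edgeFinset} * (2 * (∑ i, r i - 2 * #E)) ^ #E :=
      Nat.mul_le_mul_left _ (Nat.pow_le_pow_left (by omega) _)
    _ = 2 ^ #E * (#{F ∈ realizations r L | E ⊆ F.edgeFinset} * (∑ i, r i - 2 * #E) ^ #E) := by
      ring
    _ ≤ 2 ^ #E * (2 ^ #E * (∏ e ∈ E, (e.map r).mul) * #(realizations r L)) := by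
      refine Nat.mul_le_mul_left _ ?_
      exact card_subset_edgeFinset_mul_pow_le hD E (Nat.le_sub_of_add_le hDm)
        (Nat.sub_add_cancel (by omega)).le
    _ = _ := by
      rw [show 4 = 2 * 2 from rfl, mul_pow]
      ring

theorem card_mem_obstructions_mul_sq_le (hD : ∀ i, r i + L.degree i < D)
    (hm : 12 * D ^ 2 ≤ ∑ i, r i) (huv : u ≠ v) (x y : V) :
    #{F ∈ realizations r L | (x, y) ∈ obstructions L F u v} * (∑ i, r i) ^ 2 ≤
      16 * (r u * r v * #(realizations r L) * (r x * r y)) := by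
  have hD₁ : 1 ≤ D ^ 2 := Nat.one_le_pow _ _ ((Nat.zero_le _).trans_lt (hD u))
  by_cases hdeg : x = v ∨ y = u
  · obtain rfl | rfl := hdeg <;> simp [obstructions]
  have hne : s(u, x) ≠ s(v, y) := by grind
  have hsub : {F ∈ realizations r L | (x, y) ∈ obstructions L F u v} ⊆
      {F ∈ realizations r L | {s(u, x), s(v, y)} ⊆ F.edgeFinset} := by
    refine monotone_filter_right _ fun F _ hF ↦ ?_
    obtain ⟨hux, hvy, -⟩ := (mem_filter_univ _).1 hF
    simp [insert_subset_iff, hux, hvy]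
  have hpath := card_subset_edgeFinset_mul_sum_pow_le hD {s(u, x), s(v, y)}
    (by rw [card_pair hne]; omega) (by rw [card_pair hne]; omega)
  rw [card_pair hne, prod_pair hne, Sym2.map_mk, Sym2.map_mk, Sym2.mul_mk, Sym2.mul_mk] at hpath
  calc
    _ ≤ _ := Nat.mul_le_mul_right _ (card_le_card hsub)
    _ ≤ _ := hpath
    _ = _ := by ring

theorem card_mem_obstructions_mul_cube_le (hD : ∀ i, r i + L.degree i < D)
    (hm : 12 * D ^ 2 ≤ ∑ i, r i) (huv : u ≠ v) {x y : V} (hxy : x ≠ y) (hL : ¬L.Adj x y) :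
    #{F ∈ realizations r L | (x, y) ∈ obstructions L F u v} * (∑ i, r i) ^ 3 ≤
      64 * (r u * r v * #(realizations r L) * (r x ^ 2 * r y ^ 2)) := by
  have hD₁ : 1 ≤ D ^ 2 := Nat.one_le_pow _ _ ((Nat.zero_le _).trans_lt (hD u))
  by_cases hdeg : x = v ∨ y = u
  · obtain rfl | rfl := hdeg <;> simp [obstructions]
  have hsub : {F ∈ realizations r L | (x, y) ∈ obstructions L F u v} ⊆
      {F ∈ realizations r L | {s(u, x), s(v, y), s(x, y)} ⊆ F.edgeFinset} := by
    refine monotone_filter_right _ fun F _ hF ↦ ?_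
    obtain ⟨hux, hvy, -, -, h⟩ := (mem_filter_univ _).1 hF
    have : F.Adj x y := by grind
    simp [insert_subset_iff, hux, hvy, this]
  have hu : s(u, x) ∉ ({s(v, y), s(x, y)} : Finset (Sym2 V)) := by grind
  have hv : s(v, y) ≠ s(x, y) := by grind
  have hcard : #{s(u, x), s(v, y), s(x, y)} = 3 := by
    rw [card_insert_of_notMem hu, card_pair hv]
  have htri := card_subset_edgeFinset_mul_sum_pow_le hD {s(u, x), s(v, y), s(x, y)}
    (by rw [hcard]; omega) (by rw [hcard]; omega)
  rw [hcard, prod_insert hu, prod_pair hv] at htri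
  simp only [Sym2.map_mk, Sym2.mul_mk] at htri
  calc
    _ ≤ _ := Nat.mul_le_mul_right _ (card_le_card hsub)
    _ ≤ _ := htri
    _ = _ := by ring

theorem sum_ite_eq_or_adj_le (hD : ∀ i, r i + L.degree i < D) :
    ∑ x, ∑ y, (if x = y ∨ L.Adj x y then r x * r y else 0) ≤ D ^ 2 * ∑ i, r i := by
  rw [mul_sum]
  refine sum_le_sum fun x _ ↦ ?_
  have hN : #(insert x (L.neighborFinset x)) ≤ D := by
    refine (card_insert_le _ _).trans (lt_of_le_of_lt ?_ (hD x))
    exact Nat.le_add_left _ _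
  calc
    ∑ y, (if x = y ∨ L.Adj x y then r x * r y else 0)
    _ = ∑ y ∈ insert x (L.neighborFinset x), r x * r y := by
      rw [← sum_filter]
      congr 1
      ext
      simp [eq_comm]
    _ ≤ #(insert x (L.neighborFinset x)) • (r x * D) :=
      sum_le_card_nsmul _ _ _ fun y _ ↦
        Nat.mul_le_mul_left _ ((Nat.le_add_right _ _).trans (hD y).le)
    _ ≤ D * (r x * D) := Nat.mul_le_mul_right _ hN
    _ = D ^ 2 * r x := by ring

theorem card_mem_obstructions_mul_cube_le_ite (hD : ∀ i, r i + L.degree i < D)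
    (hm : 12 * D ^ 2 ≤ ∑ i, r i) (huv : u ≠ v) (x y : V) :
    #{F ∈ realizations r L | (x, y) ∈ obstructions L F u v} * (∑ i, r i) ^ 3 ≤
      r u * r v * #(realizations r L) *
        (16 * (∑ i, r i) * (if x = y ∨ L.Adj x y then r x * r y else 0) +
          64 * (r x ^ 2 * r y ^ 2)) := by
  split_ifs with hxy
  · have := Nat.mul_le_mul_right (∑ i, r i) (card_mem_obstructions_mul_sq_le hD hm huv x y)
    rw [mul_assoc, ← pow_succ] at this
    exact (this.trans_eq (by ring)).trans (Nat.mul_le_mul_left _ (Nat.le_add_right _ _))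
  · have := card_mem_obstructions_mul_cube_le hD hm huv (not_or.1 hxy).1 (not_or.1 hxy).2
    exact this.trans_eq (by ring)

theorem sum_card_obstructions (r : V → ℕ) (L : SimpleGraph V) (u v : V) :
    ∑ F ∈ realizations r L, #(obstructions L F u v) =
      ∑ x, ∑ y, #{F ∈ realizations r L | (x, y) ∈ obstructions L F u v} := by
  rw [← Fintype.sum_prod_type']
  calc
    _ = ∑ F ∈ realizations r L, #{p ∈ univ | p ∈ obstructions L F u v} := by
      simp only [filter_univ_mem]
    _ = _ := sum_card_bipartiteAbove_eq_sum_card_bipartiteBelow fun F p ↦ p ∈ obstructions L F u v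

theorem sum_card_obstructions_mul_le (hD : ∀ i, r i + L.degree i < D)
    (hm : 12 * D ^ 2 ≤ ∑ i, r i) (huv : u ≠ v) :
    (∑ F ∈ realizations r L, #(obstructions L F u v)) * ∑ i, r i ≤
      r u * r v * #(realizations r L) * (80 * D ^ 2) := by
  have hD_pos : 0 < D := (Nat.zero_le _).trans_lt (hD u)
  have hm_pos : 0 < ∑ i, r i := lt_of_lt_of_le (by positivity) hm
  refine Nat.le_of_mul_le_mul_right ?_ (pow_pos hm_pos 2)
  calc
    _ = ∑ x, ∑ y,
          #{F ∈ realizations r L | (x, y) ∈ obstructions L F u v} * (∑ i, r i) ^ 3 := by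
      simp only [sum_card_obstructions, ← sum_mul]
      ring
    _ ≤ ∑ x, ∑ y, r u * r v * #(realizations r L) *
          (16 * (∑ i, r i) * (if x = y ∨ L.Adj x y then r x * r y else 0) +
            64 * (r x ^ 2 * r y ^ 2)) :=
      sum_le_sum fun x _ ↦ sum_le_sum fun y _ ↦
        card_mem_obstructions_mul_cube_le_ite hD hm huv x y
    _ = r u * r v * #(realizations r L) *
          (16 * (∑ i, r i) * (∑ x, ∑ y, if x = y ∨ L.Adj x y then r x * r y else 0) +
            64 * ∑ x, ∑ y, r x ^ 2 * r y ^ 2) := by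
      simp only [← mul_sum, sum_add_distrib]
    _ ≤ r u * r v * #(realizations r L) *
          (16 * (∑ i, r i) * (D ^ 2 * ∑ i, r i) + 64 * (D * ∑ i, r i) ^ 2) := by
      gcongr
      · exact sum_ite_eq_or_adj_le hD
      · exact sum_sq_mul_sq_le fun i ↦ (Nat.le_add_right _ _).trans (hD i).le
    _ = _ := by ring

theorem abs_card_adj_mul_div_sub_one_le (hD : ∀ i, r i + L.degree i < D)
    (hm : 12 * D ^ 2 ≤ ∑ i, r i) (huv : u ≠ v) (hL : ¬L.Adj u v) (hr : 0 < r u * r v)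
    (hne : (realizations r L).Nonempty) :
    |(#{F ∈ realizations r L | F.Adj u v} : ℝ) * (∑ i, r i : ℕ) /
        (#(realizations r L) * (r u * r v : ℕ)) - 1| ≤ 86 * (D : ℝ) ^ 2 / (∑ i, r i : ℕ) := by
  have hrD (i : V) : r i ≤ D := (Nat.le_add_right _ _).trans (hD i).le
  have hD_pos : 0 < D := (Nat.zero_le _).trans_lt (hD u)
  have hm_pos : 0 < ∑ i, r i := lt_of_lt_of_le (by positivity) hm
  have hmain := abs_mul_div_sub_one_le (A := #{F ∈ realizations r L | F.Adj u v})
    (B := #{F ∈ realizations r L | ¬F.Adj u v}) (S := #(realizations r L))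
    (m := (∑ i, r i : ℕ)) (r := (r u * r v : ℕ)) (b := 2 * (D : ℝ) ^ 2)
    (T := (∑ F ∈ realizations r L, #(obstructions L F u v) : ℕ)) (E := 80 * (D : ℝ) ^ 2)
    (by positivity) (mod_cast card_filter_add_card_filter_not _) (mod_cast hne.card_pos)
    (mod_cast hr) (mod_cast hm_pos) (by positivity)
    (by
      have : 2 * (2 * D ^ 2) ≤ ∑ i, r i := by omega
      exact_mod_cast this)
    (by positivity) (mod_cast card_adj_mul_le hD u v) (mod_cast card_not_adj_mul_le huv hL)
    (mod_cast sum_card_obstructions_mul_le hD hm huv)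
  have hrr : ((r u * r v : ℕ) : ℝ) ≤ (D : ℝ) ^ 2 := by
    rw [sq]
    exact_mod_cast Nat.mul_le_mul (hrD u) (hrD v)
  refine hmain.trans ?_
  gcongr
  linarith

theorem exists_card_adj_div_card_eq (hD : ∀ i, r i + L.degree i ≤ D)
    (hm : 48 * D ^ 2 ≤ ∑ i, r i) (huv : u ≠ v) (hL : ¬L.Adj u v)
    (hne : (realizations r L).Nonempty) :
    ∃ θ : ℝ, |θ| ≤ 344 * (D : ℝ) ^ 2 / (∑ i, r i : ℕ) ∧
      (#{F ∈ realizations r L | F.Adj u v} : ℝ) / #(realizations r L) =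
        (1 + θ) * (r u * r v : ℕ) / (∑ i, r i : ℕ) := by
  obtain hr | hr := (r u * r v).eq_zero_or_pos
  · have hempty : {F ∈ realizations r L | F.Adj u v} = ∅ := by
      refine filter_eq_empty_iff.2 fun F hF hFuv ↦ ?_
      rw [← (mem_realizations.1 hF).1, ← (mem_realizations.1 hF).1] at hr
      have hu : 0 < F.degree u := F.degree_pos_iff_exists_adj u |>.2 ⟨v, hFuv⟩
      have hv : 0 < F.degree v := F.degree_pos_iff_exists_adj v |>.2 ⟨u, hFuv.symm⟩
      exact (Nat.mul_pos hu hv).ne' hr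
    exact ⟨0, by simp only [abs_zero]; positivity, by simp [hempty, hr]⟩
  have hD₁ : 1 ≤ D :=
    (Nat.pos_of_mul_pos_right hr).trans_le ((Nat.le_add_right _ _).trans (hD u))
  have hm_pos : 0 < ∑ i, r i := lt_of_lt_of_le (by positivity) hm
  have hmain := abs_card_adj_mul_div_sub_one_le (D := D + 1) (fun i ↦ Nat.lt_succ_of_le (hD i))
    (by nlinarith) huv hL hr hne
  refine ⟨_, hmain.trans ?_, ?_⟩
  · have : (1 : ℝ) ≤ D := mod_cast hD₁
    refine div_le_div_of_nonneg_right ?_ (by positivity)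
    push_cast
    nlinarith
  · have := hne.card_pos.ne'
    field_simp
    ring

end Realizations

section Prob

variable {n : ℕ}

theorem deg_eq_degree (G : SimpleGraph (Fin n)) (v : Fin n)
    [Fintype (G.neighborSet v)] : deg G v = G.degree v := by
  rw [deg, Set.ncard_eq_toFinset_card', ← neighborFinset_def, card_neighborFinset_eq_degree]

theorem sum_deg_eq_two_mul_nedges (G : SimpleGraph (Fin n)) : ∑ i, deg G i = 2 * nedges G := by
  classical
  simp only [deg_eq_degree, sum_degrees_eq_twice_card_edges, nedges, ← coe_edgeFinset,
    Set.ncard_coe_finset]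

theorem cast_sum_sub_deg {d : Fin n → ℕ} {H : SimpleGraph (Fin n)}
    (hd : ∀ i, deg H i ≤ d i) :
    ((∑ i, (d i - deg H i) : ℕ) : ℝ) = (∑ i, d i : ℕ) - 2 * nedges H := by
  have hle : 2 * nedges H ≤ ∑ i, d i := by
    rw [← sum_deg_eq_two_mul_nedges]
    exact sum_le_sum fun i _ ↦ hd i
  rw [sum_tsub_distrib _ fun i _ ↦ hd i, sum_deg_eq_two_mul_nedges, Nat.cast_sub hle]
  push_cast
  rfl

variable [∀ F : SimpleGraph (Fin n), DecidableRel F.Adj]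
  {d : Fin n → ℕ} {H₁ H₂ : SimpleGraph (Fin n)}

theorem natCard_eq_card_filter_realizations (hH : Disjoint H₁.edgeSet H₂.edgeSet)
    (hd : ∀ i, deg H₁ i ≤ d i) (Q : SimpleGraph (Fin n) → Prop) [DecidablePred Q] :
    Nat.card {G : SimpleGraph (Fin n) //
        ((∀ i, deg G i = d i) ∧ H₁ ≤ G ∧ Disjoint G.edgeSet H₂.edgeSet) ∧ Q (G \ H₁)} =
      #{F ∈ realizations (fun i ↦ d i - deg H₁ i) (H₂ ⊔ H₁) | Q F} := by
  classical
  simp only [deg_eq_degree] at hd ⊢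
  rw [← card_filter_le_and_sdiff (disjoint_edgeSet.1 hH) hd]
  refine Nat.subtype_card _ fun G ↦ ?_
  simp only [mem_filter, mem_realizations, disjoint_edgeSet]
  tauto

theorem prob_adj_eq_card_div_card (hH : Disjoint H₁.edgeSet H₂.edgeSet)
    (hd : ∀ i, deg H₁ i ≤ d i) {u v : Fin n} (huv : ¬H₁.Adj u v) :
    prob (fun G ↦ (∀ i, deg G i = d i) ∧ H₁ ≤ G ∧ Disjoint G.edgeSet H₂.edgeSet)
        (fun G ↦ G.Adj u v) =
      #{F ∈ realizations (fun i ↦ d i - deg H₁ i) (H₂ ⊔ H₁) | F.Adj u v} /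
        #(realizations (fun i ↦ d i - deg H₁ i) (H₂ ⊔ H₁)) := by
  have hnum := natCard_eq_card_filter_realizations hH hd fun F ↦ F.Adj u v
  have hden := natCard_eq_card_filter_realizations hH hd fun _ ↦ True
  simp only [sdiff_adj, huv, not_false_eq_true, and_true, filter_true] at hnum hden
  rw [prob, hnum, hden]

theorem realizations_nonempty {G : SimpleGraph (Fin n)} (hG : ∀ i, deg G i = d i) (h₁ : H₁ ≤ G)
    (h₂ : Disjoint G.edgeSet H₂.edgeSet) :
    (realizations (fun i ↦ d i - deg H₁ i) (H₂ ⊔ H₁)).Nonempty := by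
  refine ⟨G \ H₁, mem_realizations.2 ⟨fun i ↦ ?_, ?_⟩⟩
  · rw [← hG, deg_eq_degree, deg_eq_degree, ← degree_sdiff_add_degree h₁, Nat.add_sub_cancel]
  · exact ((disjoint_edgeSet.1 h₂).mono_left sdiff_le).sup_right disjoint_sdiff_self_left

theorem sub_deg_add_degree_sup_le (hH : Disjoint H₁.edgeSet H₂.edgeSet)
    (hd : ∀ i, deg H₁ i ≤ d i) (i : Fin n) :
    d i - deg H₁ i + (H₂ ⊔ H₁).degree i ≤ univ.sup d + maxDeg H₂ := by
  rw [degree_sup_of_disjoint (disjoint_edgeSet.1 hH).symm, ← deg_eq_degree, ← deg_eq_degree]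
  have h₁ : d i ≤ univ.sup d := le_sup (mem_univ i)
  have h₂ : deg H₂ i ≤ maxDeg H₂ := le_sup (mem_univ i)
  have := hd i
  omega

end Prob

end

/-- McKay-type conditional edge probability with relative error `O(Δ²/M)`. -/
theorem stmt0 (K c : ℝ) (hK : 1 ≤ K) (hc : 0 < c) :
    ∃ C δ : ℝ, 0 < C ∧ 0 < δ ∧
      ∀ (n : ℕ), 1 ≤ n → ∀ (d : Fin n → ℕ) (M Δ : ℕ),
        M = ∑ i, d i → Δ = Finset.univ.sup d →
        Even M → (Δ : ℝ) ^ 2 ≤ δ * M →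
        ∀ H₁ H₂ : SimpleGraph (Fin n),
        Disjoint H₁.edgeSet H₂.edgeSet →
        (∀ i, deg H₁ i ≤ d i) →
        (maxDeg H₂ : ℝ) ≤ K * Δ →
        c * M ≤ (M : ℝ) - 2 * nedges H₁ →
        ∀ u v : Fin n, u ≠ v → ¬ (H₁ ⊔ H₂).Adj u v →
        (∃ G : SimpleGraph (Fin n),
          (∀ i, deg G i = d i) ∧ H₁ ≤ G ∧ Disjoint G.edgeSet H₂.edgeSet) →
        ∃ θ : ℝ, |θ| ≤ C * (Δ : ℝ) ^ 2 / M ∧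
          prob (fun G => (∀ i, deg G i = d i) ∧ H₁ ≤ G ∧ Disjoint G.edgeSet H₂.edgeSet)
              (fun G => G.Adj u v)
            = (1 + θ) * (((d u : ℝ) - deg H₁ u) * ((d v : ℝ) - deg H₁ v)) /
                ((M : ℝ) - 2 * nedges H₁) := by
  have hK₀ : 0 < 1 + K := by linarith
  refine ⟨344 * (1 + K) ^ 2 / c, c / (48 * (1 + K) ^ 2), by positivity, by positivity, ?_⟩
  rintro n - d M Δ rfl rfl - hδ H₁ H₂ hH hd hH₂ hm u v huv hL ⟨G, hG, hG₁, hG₂⟩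
  classical
  rw [sup_comm] at hL
  rw [← cast_sum_sub_deg hd] at hm ⊢
  have hDK : ((Finset.univ.sup d + maxDeg H₂ : ℕ) : ℝ) ≤ (1 + K) * (Finset.univ.sup d : ℕ) := by
    push_cast
    linarith
  have hDm : 48 * ((Finset.univ.sup d + maxDeg H₂ : ℕ) : ℝ) ^ 2 ≤ (∑ i, (d i - deg H₁ i) : ℕ) :=
    mul_sq_le_of_sq_le (by norm_num) hK₀ (by positivity) hDK hδ hm
  obtain ⟨θ, hθ, h⟩ := exists_card_adj_div_card_eq (sub_deg_add_degree_sup_le hH hd)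
    (mod_cast hDm) huv hL (realizations_nonempty hG hG₁ hG₂)
  refine ⟨θ, hθ.trans (mul_sq_div_le_mul_sq_div (by norm_num) hc (by positivity) (by positivity)
    hDK hδ hm), ?_⟩
  rw [prob_adj_eq_card_div_card hH hd fun h ↦ hL (Or.inr h), h, Nat.cast_mul,
    Nat.cast_sub (hd u), Nat.cast_sub (hd v)]
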